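/- arXiv:2602.18969 — 4 statements merged into one kernel-verified Lean document; each statement's English description precedes it below -/
import Mathlib

section
/- The number of 2-dimensional subspaces of F_2^6 that are NOT totally isotropic for the standard symplectic form ω equals 336. (This is the paper's count of non-isotropic Klein subgroups of JH[2]: 63·33/6 = 336.) -/
/-!
The count is a double count of the hyperbolic pairs, that is, the pairs `(x, y)` with
`ω(x, y) = 1`. For `x ≠ 0` some `z` has `ω(x, z) = 1`, and translation by `z` exchanges the
solutions of `ω(x, y) = 1` and of `ω(x, y) = 0`; hence there are `63 * 32 = 2016` hyperbolic pairs
(`card_hypPair`). A hyperbolic pair is linearly independent, so it spans a plane, which is not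
totally isotropic; and every plane that is not totally isotropic arises in this way. If `(a, b)`
is one hyperbolic pair spanning `W`, then `ω(s a + t b, u a + v b) = s v + t u`, so that the
hyperbolic pairs spanning `W` correspond to the invertible `2 × 2` matrices over `F₂`, of which
there are six (`card_fibre`). The number of planes is therefore `2016 / 6 = 336`.
-/

/-- The standard symplectic form on `F₂^6`:
`ω(x,y) = ∑_{i=0}^{2} (xᵢ·y_{i+3} + x_{i+3}·yᵢ)`. -/
def omega6 (x y : Fin 6 → ZMod 2) : ZMod 2 :=
  ∑ i : Fin 3, (x (Fin.castAdd 3 i) * y (Fin.addNat i 3) +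
    x (Fin.addNat i 3) * y (Fin.castAdd 3 i))

lemma zmod2_eq_one_of_ne_zero : ∀ c : ZMod 2, c ≠ 0 → c = 1 := by decide

lemma omega6_apply (x y : Fin 6 → ZMod 2) :
    omega6 x y = x 0 * y 3 + x 3 * y 0 + (x 1 * y 4 + x 4 * y 1) + (x 2 * y 5 + x 5 * y 2) := by
  rw [omega6, Fin.sum_univ_three]
  rfl

lemma omega6_add_right (x y z : Fin 6 → ZMod 2) :
    omega6 x (y + z) = omega6 x y + omega6 x z := by
  simp only [omega6_apply, Pi.add_apply]
  ring

lemma omega6_self (x : Fin 6 → ZMod 2) : omega6 x x = 0 := by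
  have h : ∀ c : ZMod 2, c + c = 0 := CharTwo.add_self_eq_zero
  rw [omega6_apply, mul_comm (x 3), mul_comm (x 4), mul_comm (x 5), h, h, h, h, add_zero]

lemma omega6_comm (x y : Fin 6 → ZMod 2) : omega6 x y = omega6 y x := by
  simp only [omega6_apply]
  ring

lemma omega6_comb (a b : Fin 6 → ZMod 2) (s t u v : ZMod 2) :
    omega6 (s • a + t • b) (u • a + v • b) = (s * v + t * u) * omega6 a b := by
  have h : omega6 (s • a + t • b) (u • a + v • b) =
      s * u * omega6 a a + s * v * omega6 a b + t * u * omega6 b a + t * v * omega6 b b := by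
    simp only [omega6_apply, Pi.add_apply, Pi.smul_apply, smul_eq_mul]
    ring
  rw [h, omega6_self, omega6_self, omega6_comm b a]
  ring

/-- The form is nondegenerate. -/
lemma exists_omega6_eq_one {x : Fin 6 → ZMod 2} (hx : x ≠ 0) : ∃ z, omega6 x z = 1 := by
  obtain ⟨i, hi⟩ := Function.ne_iff.mp hx
  have hi : x i = 1 := zmod2_eq_one_of_ne_zero _ hi
  refine ⟨Pi.single (i + 3) 1, ?_⟩
  fin_cases i <;> simp_all [omega6_apply, Fin.ext_iff]

lemma card_omega6_eq_one {x : Fin 6 → ZMod 2} (hx : x ≠ 0) :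
    Nat.card {y // omega6 x y = 1} = 32 := by
  obtain ⟨z, hz⟩ := exists_omega6_eq_one hx
  have h2 : ∀ c : ZMod 2, c + 1 = 1 ↔ ¬ c = 1 := by decide
  have e : {y // omega6 x y = 1} ≃ {y // ¬ omega6 x y = 1} :=
    ((Equiv.addRight z).subtypeEquiv fun y => by
      simp [omega6_add_right, hz, h2])
  have hs := Nat.card_congr (Equiv.sumCompl fun y => omega6 x y = 1)
  rw [Nat.card_sum, ← Nat.card_congr e] at hs
  have h64 : Nat.card (Fin 6 → ZMod 2) = 64 := by simp
  omega

/-- The ordered pairs `(x, y)` with `ω(x, y) = 1`. -/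
abbrev HypPair : Type := {p : (Fin 6 → ZMod 2) × (Fin 6 → ZMod 2) // omega6 p.1 p.2 = 1}

lemma card_hypPair : Nat.card HypPair = 2016 := by
  have e : HypPair ≃ Σ x : Fin 6 → ZMod 2, {y // omega6 x y = 1} :=
    Equiv.subtypeProdEquivSigmaSubtype fun x y => omega6 x y = 1
  rw [Nat.card_congr e, Nat.card_sigma, ← Finset.add_sum_erase _ _ (Finset.mem_univ 0),
    Finset.sum_congr rfl fun x hx => card_omega6_eq_one (Finset.ne_of_mem_erase hx)]
  simp [omega6_apply]

lemma finrank_span_of_omega6 {a b : Fin 6 → ZMod 2} (h : omega6 a b = 1) :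
    Module.finrank (ZMod 2) (Submodule.span (ZMod 2) {a, b}) = 2 := by
  have hli : LinearIndependent (ZMod 2) ![a, b] := by
    rw [LinearIndependent.pair_iff]
    intro s t hst
    -- Pairing the relation with `b` isolates `s`, and pairing it with `a` isolates `t`.
    have h1 := omega6_comb a b s t 0 1
    have h2 := omega6_comb a b s t 1 0
    rw [hst, h] at h1 h2
    simp [omega6_apply] at h1 h2
    exact ⟨h1.symm, h2.symm⟩
  have hc := finrank_span_eq_card hli
  rwa [Matrix.range_cons_cons_empty, Fintype.card_fin] at hc

lemma span_eq_of_omega6 {W : Submodule (ZMod 2) (Fin 6 → ZMod 2)}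
    (hW : Module.finrank (ZMod 2) W = 2) {a b : Fin 6 → ZMod 2} (ha : a ∈ W) (hb : b ∈ W)
    (h : omega6 a b = 1) : Submodule.span (ZMod 2) {a, b} = W := by
  apply Submodule.eq_of_le_of_finrank_eq
  · rw [Submodule.span_le]
    rintro x (rfl | rfl) <;> assumption
  · rw [finrank_span_of_omega6 h, hW]

/-- The planes of `F₂^6` that are not totally isotropic. -/
abbrev HypPlane : Type := {W : Submodule (ZMod 2) (Fin 6 → ZMod 2) //
  Module.finrank (ZMod 2) W = 2 ∧ ¬ (∀ x ∈ W, ∀ y ∈ W, omega6 x y = 0)}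

/-- The plane spanned by a hyperbolic pair. -/
def spanPair (p : HypPair) : HypPlane :=
  ⟨Submodule.span (ZMod 2) {p.1.1, p.1.2}, finrank_span_of_omega6 p.2, fun h => by
    have h0 := h p.1.1 (Submodule.subset_span (by simp)) p.1.2 (Submodule.subset_span (by simp))
    rw [p.2] at h0
    exact one_ne_zero h0⟩

/-- The hyperbolic pairs spanning a given plane are indexed by the invertible `2 × 2` matrices
over `F₂`, through their coordinates in one such pair. -/
lemma card_fibre (W : HypPlane) : Nat.card {p : HypPair // spanPair p = W} = 6 := by
  obtain ⟨W, hW, hn⟩ := W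
  obtain ⟨a, ha, b, hb, hab⟩ : ∃ a ∈ W, ∃ b ∈ W, omega6 a b ≠ 0 := by
    push Not at hn
    exact hn
  have hab : omega6 a b = 1 := zmod2_eq_one_of_ne_zero _ hab
  have hspan := span_eq_of_omega6 hW ha hb hab
  let M := {q : (ZMod 2 × ZMod 2) × (ZMod 2 × ZMod 2) // q.1.1 * q.2.2 + q.1.2 * q.2.1 = 1}
  have hM : Nat.card M = 6 := by
    rw [Nat.card_eq_fintype_card]
    decide
  have hmem (s t : ZMod 2) : s • a + t • b ∈ W :=
    W.add_mem (W.smul_mem _ ha) (W.smul_mem _ hb)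
  have hom (q : M) :
      omega6 (q.1.1.1 • a + q.1.1.2 • b) (q.1.2.1 • a + q.1.2.2 • b) = 1 := by
    rw [omega6_comb, hab, q.2, one_mul]
  let f (q : M) : {p : HypPair // spanPair p = ⟨W, hW, hn⟩} :=
    ⟨⟨(q.1.1.1 • a + q.1.1.2 • b, q.1.2.1 • a + q.1.2.2 • b), hom q⟩,
      Subtype.ext (span_eq_of_omega6 hW (hmem _ _) (hmem _ _) (hom q))⟩
  have hinj (s t s' t' : ZMod 2) (h : s • a + t • b = s' • a + t' • b) : (s, t) = (s', t') := by
    have h1 := omega6_comb a b s t 0 1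
    have h2 := omega6_comb a b s t 1 0
    rw [h, omega6_comb, hab] at h1 h2
    simp at h1 h2
    rw [h1, h2]
  refine (Nat.card_eq_of_bijective f ⟨?_, ?_⟩).symm.trans hM
  · intro q q' h
    have h' := congrArg (fun p => p.1.1) h
    exact Subtype.ext (Prod.ext (hinj _ _ _ _ (congrArg Prod.fst h'))
      (hinj _ _ _ _ (congrArg Prod.snd h')))
  · rintro ⟨⟨⟨x, y⟩, hxy⟩, hp⟩
    have hp' : Submodule.span (ZMod 2) {x, y} = W := congrArg Subtype.val hp
    have hx : x ∈ Submodule.span (ZMod 2) {a, b} := by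
      rw [hspan, ← hp']; exact Submodule.subset_span (by simp)
    have hy : y ∈ Submodule.span (ZMod 2) {a, b} := by
      rw [hspan, ← hp']; exact Submodule.subset_span (by simp)
    obtain ⟨s, t, rfl⟩ := Submodule.mem_span_pair.mp hx
    obtain ⟨u, v, rfl⟩ := Submodule.mem_span_pair.mp hy
    refine ⟨⟨((s, t), (u, v)), ?_⟩, rfl⟩
    simpa [omega6_comb, hab] using hxy

/-- the number of 2-dimensional subspaces of `F₂^6` that are NOT totally
isotropic for the standard symplectic form equals 336. -/
theorem statement5 :
    Nat.card {W : Submodule (ZMod 2) (Fin 6 → ZMod 2) //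
      Module.finrank (ZMod 2) W = 2 ∧ ¬ (∀ x ∈ W, ∀ y ∈ W, omega6 x y = 0)} = 336 := by
  change Nat.card HypPlane = 336
  have := Fintype.ofFinite HypPlane
  have h := Nat.card_congr (Equiv.sigmaFiberEquiv spanPair)
  rw [Nat.card_sigma, Finset.sum_congr rfl fun W _ => card_fibre W, card_hypPair,
    Finset.sum_const, Finset.card_univ, ← Nat.card_eq_fintype_card, smul_eq_mul] at h
  omega
end

section
/- In E_3, every nonzero class has a representative of cardinality 2 or of cardinality 4; moreover, exactly 28 of the 63 nonzero classes have a 2-element representative, and exactly 35 nonzero classes have a 4-element representative but no 2-element representative. -/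
/-!
An even subset `S` of the eight points has class determined by the unordered pair `{S, Sᶜ}`
(`cls_eq_cls_iff`): two even sets have the same class exactly when they are equal or complementary.
Every class comes from an even set (`exists_even_cls_eq`), whose cardinality is 0, 2, 4, 6 or 8;
cardinalities 0 and 8 give the zero class, and a 6-element set may be replaced by its complement.
Hence a nonzero class has a representative of size 2 or of size 4.

Complementation sends 2-element sets to 6-element sets, so the classes with a 2-element
representative correspond bijectively to the `C(8,2) = 28` pairs. It preserves 4-element sets, and
exactly one member of each complementary pair contains the point `0`, so the classes with a
4-element representative correspond to the `C(8,4)/2 = 35` four-element sets through `0`. The two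
kinds are disjoint, which gives `28 + 35 = 63` nonzero classes.
-/

open Finset Submodule

noncomputable section

def sumMap : (Fin 8 → ZMod 2) →ₗ[ZMod 2] ZMod 2 where
  toFun v := ∑ i, v i
  map_add' v w := by simp [Finset.sum_add_distrib]
  map_smul' c v := by simp [Finset.mul_sum]

def V3 : Submodule (ZMod 2) (Fin 8 → ZMod 2) := LinearMap.ker sumMap

@[simp] lemma sumMap_apply (v : Fin 8 → ZMod 2) : sumMap v = ∑ i, v i := rfl

lemma mem_V3 (v : Fin 8 → ZMod 2) : v ∈ V3 ↔ ∑ i, v i = 0 := by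
  simp [V3, LinearMap.mem_ker]

def onesV : V3 := ⟨fun _ => 1, by rw [mem_V3]; decide⟩

abbrev E3 := V3 ⧸ span (ZMod 2) {onesV}

def indFun (S : Finset (Fin 8)) : Fin 8 → ZMod 2 := fun i => if i ∈ S then 1 else 0

open Classical in
def cls (S : Finset (Fin 8)) : E3 :=
  if h : indFun S ∈ V3 then Submodule.Quotient.mk (⟨indFun S, h⟩ : V3) else 0

/-- `x` has a `k`-element representative -/
def hasRep (k : ℕ) (x : E3) : Prop := ∃ S : Finset (Fin 8), S.card = k ∧ cls S = x

lemma indFun_mem_V3 (S : Finset (Fin 8)) : indFun S ∈ V3 ↔ Even #S := by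
  rw [mem_V3]
  simp [indFun, ZMod.natCast_eq_zero_iff_even]

/-- `cls` takes the junk value `0` on sets of odd cardinality, so evenness is assumed throughout. -/
lemma cls_of_even {S : Finset (Fin 8)} (h : Even #S) :
    cls S = Submodule.Quotient.mk (⟨indFun S, (indFun_mem_V3 S).2 h⟩ : V3) :=
  dif_pos _

lemma cls_eq_cls_iff {S T : Finset (Fin 8)} (hS : Even #S) (hT : Even #T) :
    cls S = cls T ↔ S = T ∨ S = Tᶜ := by
  rw [cls_of_even hS, cls_of_even hT, Submodule.Quotient.eq, mem_span_singleton]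
  constructor
  · rintro ⟨a, ha⟩
    have key (i : Fin 8) : a = indFun S i - indFun T i := by
      simpa [onesV] using congrFun (congrArg Subtype.val ha) i
    -- The scalar `a` of `F_2` decides which alternative holds: `0` for equality, `1` for complement.
    have ha01 : a = 0 ∨ a = 1 := by
      clear ha key
      revert a
      decide
    rcases ha01 with rfl | rfl
    · left
      ext i
      have hi := key i
      by_cases h1 : i ∈ S <;> by_cases h2 : i ∈ T <;> simp [indFun, h1, h2] at hi ⊢
    · right
      ext i
      have hi := key i
      by_cases h1 : i ∈ S <;> by_cases h2 : i ∈ T <;> simp [indFun, h1, h2] at hi ⊢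
  · rintro (rfl | rfl)
    · exact ⟨0, by simp⟩
    · refine ⟨1, Subtype.ext (funext fun i => ?_)⟩
      by_cases h : i ∈ T <;> simp [onesV, indFun, h]

lemma card_compl_eight (S : Finset (Fin 8)) : #Sᶜ = 8 - #S := by
  rw [card_compl, Fintype.card_fin]

lemma cls_compl {S : Finset (Fin 8)} (h : Even #S) : cls Sᶜ = cls S := by
  have hc : Even #Sᶜ := by
    have := card_compl_add_card S
    rw [Fintype.card_fin] at this
    grind
  exact (cls_eq_cls_iff hc h).2 (Or.inr rfl)

lemma cls_empty : cls ∅ = 0 := by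
  have h0 : (⟨indFun ∅, (indFun_mem_V3 ∅).2 (by simp)⟩ : V3) = 0 :=
    Subtype.ext (funext fun i => by simp [indFun])
  rw [cls_of_even (by simp), h0, Submodule.Quotient.mk_zero]

lemma cls_ne_zero {S : Finset (Fin 8)} (h : Even #S) (h0 : #S ≠ 0) (h8 : #S ≠ 8) :
    cls S ≠ 0 := by
  rw [← cls_empty, Ne, cls_eq_cls_iff h (by simp)]
  rintro (rfl | rfl) <;> simp at h0 h8

lemma exists_even_cls_eq (x : E3) : ∃ S : Finset (Fin 8), Even #S ∧ cls S = x := by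
  obtain ⟨⟨v, hv⟩, rfl⟩ := Submodule.Quotient.mk_surjective _ x
  have hind : indFun {i | v i = 1} = v := by
    funext i
    have (a : ZMod 2) : (if a = 1 then 1 else 0) = a := by revert a; decide
    simp [indFun, this]
  have he : Even #({i | v i = 1} : Finset (Fin 8)) := by
    rw [← indFun_mem_V3, hind]; exact hv
  exact ⟨_, he, by simp only [cls_of_even he, hind]⟩

lemma hasRep_two_or_four {x : E3} (hx : x ≠ 0) : hasRep 2 x ∨ hasRep 4 x := by
  obtain ⟨S, he, rfl⟩ := exists_even_cls_eq x
  have hle : #S ≤ 8 := by simpa using card_le_univ S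
  have hc := card_compl_eight S
  have h0 : #S ≠ 0 := fun h => hx (by rw [card_eq_zero.1 h, cls_empty])
  have h8 : #S ≠ 8 := fun h => hx (by
    rw [← cls_compl he, card_eq_zero.1 (by omega : #Sᶜ = 0), cls_empty])
  obtain h | h | h : #S = 2 ∨ #S = 4 ∨ #S = 6 := by grind
  · exact Or.inl ⟨S, h, rfl⟩
  · exact Or.inr ⟨S, h, rfl⟩
  · exact Or.inl ⟨Sᶜ, by omega, cls_compl he⟩

lemma not_hasRep_two_of_hasRep_four {x : E3} (h4 : hasRep 4 x) : ¬ hasRep 2 x := by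
  obtain ⟨S, hS, rfl⟩ := h4
  rintro ⟨T, hT, h⟩
  rcases (cls_eq_cls_iff (by rw [hT]; decide) (by rw [hS]; decide)).1 h with rfl | rfl
  · omega
  · rw [card_compl_eight] at hT
    omega

lemma hasRep.ne_zero {k : ℕ} {x : E3} (h : hasRep k x) (hk : Even k) (h0 : k ≠ 0) (h8 : k ≠ 8) :
    x ≠ 0 := by
  obtain ⟨S, rfl, rfl⟩ := h
  exact cls_ne_zero hk h0 h8

lemma ncard_hasRep_two : {x : E3 | hasRep 2 x}.ncard = 28 := by
  have himg : {x : E3 | hasRep 2 x} = cls '' (powersetCard 2 univ : Finset (Finset (Fin 8))) := by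
    ext x
    simp [hasRep]
  rw [himg, Set.InjOn.ncard_image, Set.ncard_coe_finset, card_powersetCard]
  · rfl
  · intro S hS T hT h
    have hS : #S = 2 := by simpa using hS
    have hT : #T = 2 := by simpa using hT
    refine ((cls_eq_cls_iff (by rw [hS]; decide) (by rw [hT]; decide)).1 h).resolve_right ?_
    rintro rfl
    rw [card_compl_eight] at hS
    omega

/-- Among the two complementary 4-element representatives of a class, the one containing the
point `0` is a canonical choice. -/
lemma ncard_hasRep_four : {x : E3 | hasRep 4 x}.ncard = 35 := by
  have himg : {x : E3 | hasRep 4 x} =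
      cls '' ({S ∈ powersetCard 4 univ | 0 ∈ S} : Finset (Finset (Fin 8))) := by
    ext x
    simp only [hasRep, Set.mem_ofPred_eq, Set.mem_image, mem_coe, mem_filter,
      mem_powersetCard_univ]
    constructor
    · rintro ⟨S, hS, rfl⟩
      by_cases h0 : 0 ∈ S
      · exact ⟨S, ⟨hS, h0⟩, rfl⟩
      · exact ⟨Sᶜ, ⟨by rw [card_compl_eight, hS], mem_compl.2 h0⟩,
          cls_compl (by rw [hS]; decide)⟩
    · rintro ⟨S, ⟨hS, -⟩, rfl⟩
      exact ⟨S, hS, rfl⟩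
  rw [himg, Set.InjOn.ncard_image, Set.ncard_coe_finset]
  · rfl
  · intro S hS T hT h
    obtain ⟨hS, hS0⟩ : #S = 4 ∧ 0 ∈ S := by simpa using hS
    obtain ⟨hT, hT0⟩ : #T = 4 ∧ 0 ∈ T := by simpa using hT
    refine ((cls_eq_cls_iff (by rw [hS]; decide) (by rw [hT]; decide)).1 h).resolve_right ?_
    rintro rfl
    exact mem_compl.1 hS0 hT0

/-- in `E₃`, every nonzero class has a representative of cardinality 2
or of cardinality 4; moreover exactly 28 of the 63 nonzero classes have a 2-element
representative, and exactly 35 nonzero classes have a 4-element representative but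
no 2-element representative. -/
theorem statement6 :
    (∀ x : E3, x ≠ 0 → hasRep 2 x ∨ hasRep 4 x) ∧
    Nat.card {x : E3 // x ≠ 0} = 63 ∧
    Nat.card {x : E3 // x ≠ 0 ∧ hasRep 2 x} = 28 ∧
    Nat.card {x : E3 // x ≠ 0 ∧ hasRep 4 x ∧ ¬ hasRep 2 x} = 35 := by
  have ne2 {x : E3} (h : hasRep 2 x) : x ≠ 0 := h.ne_zero (by decide) (by decide) (by decide)
  have ne4 {x : E3} (h : hasRep 4 x) : x ≠ 0 := h.ne_zero (by decide) (by decide) (by decide)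
  refine ⟨fun x hx => hasRep_two_or_four hx, ?_, ?_, ?_⟩
  · have hunion : {x : E3 | x ≠ 0} = {x | hasRep 2 x} ∪ {x | hasRep 4 x} := by
      ext x
      exact ⟨hasRep_two_or_four, fun h => h.elim ne2 ne4⟩
    have hdisj : Disjoint {x : E3 | hasRep 2 x} {x | hasRep 4 x} :=
      Set.disjoint_left.2 fun x h2 h4 => not_hasRep_two_of_hasRep_four h4 h2
    change {x : E3 | x ≠ 0}.ncard = 63
    -- Finiteness is read off from the nonzero values of `ncard`.
    rw [hunion, Set.ncard_union_eq hdisj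
      (Set.finite_of_ncard_ne_zero (by rw [ncard_hasRep_two]; decide))
      (Set.finite_of_ncard_ne_zero (by rw [ncard_hasRep_four]; decide)),
      ncard_hasRep_two, ncard_hasRep_four]
  · rw [← ncard_hasRep_two]
    exact congrArg Set.ncard (Set.ext fun x => ⟨And.right, fun h => ⟨ne2 h, h⟩⟩)
  · rw [← ncard_hasRep_four]
    exact congrArg Set.ncard (Set.ext fun x =>
      ⟨fun h => h.2.1, fun h => ⟨ne4 h, h, not_hasRep_two_of_hasRep_four h⟩⟩)

end
end

section
/- The number of 2-dimensional subspaces W ⊆ E_3 such that exactly one of the three nonzero elements of W has a 2-element representative equals 280. (These correspond to Klein coverings of hyperelliptic genus 3 curves of type I.2, with generators η = w_1 − w_2, ξ = w_1 − w_3 + w_4 − w_5; the degree of the forgetful map on this component is 280.) -/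
/-! Call a nonzero class special if it has a 2-element representative. A plane `W` over `F_2` has
three nonzero elements, so a plane with exactly one special element `a` is spanned by `a` and
either of its two other nonzero elements. Hence such planes are counted by half the number of
pairs `(a, b)` of distinct nonzero vectors with `a` special and `b`, `a + b` not special
(`two_mul_card_planes`).

The pairs are counted in coordinates: each class in `E3` has a unique representative not
containing the last point, and an even subset of the first seven points is determined by its
trace on the first six, whence an isomorphism `E3 ≃ F_2^6` (`e3Equiv`). It carries the classes of
2-element sets to the vectors whose weight is `1` or `2` modulo `4`, and a finite
computation gives `560` pairs. (Conceptually: `a = {i, j}` can be chosen in `28` ways, and `b`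
must be one of the `20` splittings of the eight points into two 4-sets that separate `i` from `j`.)
-/

open Finset Submodule

noncomputable section

/-- The ordered pairs `(a, b)` of distinct nonzero vectors such that, among `a`, `b`, `a + b`,
exactly the first satisfies `P`. -/
def IsGoodPair {V : Type*} [AddCommGroup V] (P : V → Prop) (p : V × V) : Prop :=
  P p.1 ∧ ¬ P p.2 ∧ ¬ P (p.1 + p.2) ∧ p.1 ≠ 0 ∧ p.2 ≠ 0 ∧ p.1 ≠ p.2

section Planes

variable {V : Type*} [AddCommGroup V] [Module (ZMod 2) V]

lemma eq_zero_or_one (c : ZMod 2) : c = 0 ∨ c = 1 := by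
  revert c
  decide

lemma mem_span_pair_two {a b x : V} :
    x ∈ span (ZMod 2) {a, b} ↔ x = 0 ∨ x = a ∨ x = b ∨ x = a + b := by
  rw [mem_span_pair]
  constructor
  · rintro ⟨c, d, rfl⟩
    obtain rfl | rfl := eq_zero_or_one c <;> obtain rfl | rfl := eq_zero_or_one d <;> simp
  · rintro (rfl | rfl | rfl | rfl)
    · exact ⟨0, 0, by simp⟩
    · exact ⟨1, 0, by simp⟩
    · exact ⟨0, 1, by simp⟩
    · exact ⟨1, 1, by simp⟩

lemma finrank_span_pair_two {a b : V} (ha : a ≠ 0) (hb : b ≠ 0) (hab : a ≠ b) :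
    Module.finrank (ZMod 2) (span (ZMod 2) {a, b}) = 2 := by
  have h : LinearIndependent (ZMod 2) ![a, b] := by
    rw [LinearIndependent.pair_iff]
    intro s t hst
    obtain rfl | rfl := eq_zero_or_one s <;> obtain rfl | rfl := eq_zero_or_one t <;>
      simp_all [add_eq_zero_iff_eq_neg, ZModModule.neg_eq_self]
  rw [← Matrix.range_cons_cons_empty a b ![]]
  simpa only [Fintype.card_fin] using finrank_span_eq_card h

open Classical in
/-- Each plane with exactly one nonzero vector satisfying `P` is the span of exactly two
good pairs `(a, b)`, which differ in the choice of `b` among the two other nonzero vectors, and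
every good pair spans such a plane. -/
lemma two_mul_card_planes [Finite V] (P : V → Prop) :
    Nat.card {p : V × V // IsGoodPair P p} =
    2 * Nat.card {W : Submodule (ZMod 2) V // Module.finrank (ZMod 2) W = 2 ∧
      Nat.card {x : V // x ∈ W ∧ x ≠ 0 ∧ P x} = 1} := by
  have := Fintype.ofFinite V
  have := Fintype.ofFinite (Submodule (ZMod 2) V)
  rw [Nat.card_eq_fintype_card, Nat.card_eq_fintype_card, Fintype.card_subtype,
    Fintype.card_subtype, mul_comm]
  rw [Finset.card_eq_sum_card_fiberwise (f := fun p : V × V => span (ZMod 2) {p.1, p.2})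
    (t := {W : Submodule (ZMod 2) V | Module.finrank (ZMod 2) W = 2 ∧
      Nat.card {x : V // x ∈ W ∧ x ≠ 0 ∧ P x} = 1}), Finset.sum_const_nat]
  · intro W hW
    rw [mem_filter_univ, Nat.card_eq_one_iff_exists] at hW
    obtain ⟨hdim, ⟨a, haW, ha, hPa⟩, huniq⟩ := hW
    have huniq' : ∀ x ∈ W, x ≠ 0 → P x → x = a := fun x h₁ h₂ h₃ =>
      congrArg Subtype.val (huniq ⟨x, h₁, h₂, h₃⟩)
    have hcard : #{x : V | x ∈ W} = 4 := by
      rw [← Fintype.card_subtype, ← Nat.card_eq_fintype_card]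
      have := Module.natCard_eq_pow_finrank (K := ZMod 2) (V := W)
      simpa [hdim] using this
    -- The good pairs spanning `W` are the `(a, b)` with `b` one of the `4 - 2` vectors of `W`
    -- other than `0` and `a`.
    have hfib : ({p ∈ ({p | IsGoodPair P p} : Finset (V × V)) | span (ZMod 2) {p.1, p.2} = W}) =
        ((({x : V | x ∈ W} : Finset V).erase 0).erase a).image (fun b => (a, b)) := by
      ext ⟨x, b⟩
      simp only [mem_filter, mem_univ, true_and, mem_image, mem_erase, Prod.mk.injEq]
      constructor
      · rintro ⟨⟨hPx, -, -, hx, hb, hxb⟩, rfl⟩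
        have hxa : x = a := huniq' x (mem_span_pair_two.2 (by simp)) hx hPx
        subst hxa
        exact ⟨b, ⟨hxb.symm, hb, mem_span_pair_two.2 (by simp)⟩, rfl, rfl⟩
      · rintro ⟨b, ⟨hba, hb, hbW⟩, rfl, rfl⟩
        refine ⟨⟨hPa, fun h => hba (huniq' b hbW hb h), fun h => ?_, ha, hb, hba.symm⟩, ?_⟩
        · refine hb (add_eq_left.1 (huniq' (a + b) (W.add_mem haW hbW) (fun h0 => hba ?_) h))
          rw [← ZModModule.neg_eq_self b]
          exact (eq_neg_of_add_eq_zero_left h0).symm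
        · refine Submodule.eq_of_le_of_finrank_eq (span_le.2 ?_) ?_
          · rintro y (rfl | rfl) <;> assumption
          · rw [hdim, finrank_span_pair_two ha hb hba.symm]
    rw [hfib, card_image_of_injective _ (Prod.mk_right_injective a), card_erase_of_mem,
      card_erase_of_mem, hcard]
    · simp
    · simp [ha, haW]
  · rintro ⟨a, b⟩ h
    simp only [coe_filter, mem_univ, true_and, Set.mem_ofPred_eq] at h ⊢
    obtain ⟨hPa, hPb, hPab, ha, hb, hab⟩ := h
    refine ⟨finrank_span_pair_two ha hb hab, ?_⟩
    rw [Nat.card_eq_one_iff_exists]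
    refine ⟨⟨a, mem_span_pair_two.2 (by simp), ha, hPa⟩, ?_⟩
    rintro ⟨x, hx, hx0, hPx⟩
    rw [Subtype.mk.injEq]
    rcases mem_span_pair_two.1 hx with rfl | rfl | rfl | rfl
    · exact absurd rfl hx0
    · rfl
    · exact absurd hPx hPb
    · exact absurd hPx hPab

end Planes

/-- Coordinates on `E3`: the trace on the first six points of the representative
avoiding the last point. -/
def coordMap : (Fin 8 → ZMod 2) →ₗ[ZMod 2] (Fin 6 → ZMod 2) where
  toFun v i := v (Fin.castLE (by norm_num) i) + v 7
  map_add' v w := by ext i; simp; ring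
  map_smul' c v := by ext i; simp; ring

lemma ker_coordMap : span (ZMod 2) {onesV} = LinearMap.ker (coordMap.domRestrict V3) := by
  apply le_antisymm
  · rw [span_singleton_le_iff_mem, LinearMap.mem_ker]
    decide
  · rintro ⟨v, hv⟩ h
    rw [LinearMap.mem_ker] at h
    have key : ∀ v : Fin 8 → ZMod 2, ∑ i, v i = 0 → coordMap v = 0 → v = v 7 • fun _ => 1 := by
      decide +kernel
    exact mem_span_singleton.2 ⟨v 7, Subtype.ext (key v ((mem_V3 v).1 hv) h).symm⟩

lemma coordMap_surjective : Function.Surjective (coordMap.domRestrict V3) := by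
  intro m
  refine ⟨⟨![m 0, m 1, m 2, m 3, m 4, m 5, ∑ i, m i, 0], ?_⟩, ?_⟩
  · rw [mem_V3]
    revert m
    decide +kernel
  · ext i
    fin_cases i <;> simp [coordMap]

/-- `E3 ≃ F_2^6`, induced by `coordMap`. -/
def e3Equiv : E3 ≃ₗ[ZMod 2] (Fin 6 → ZMod 2) :=
  (Submodule.quotEquivOfEq _ _ ker_coordMap).trans
    (LinearMap.quotKerEquivOfSurjective _ coordMap_surjective)

lemma e3Equiv_mk (v : V3) : e3Equiv (Submodule.Quotient.mk v) = coordMap v := rfl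

/-- The vectors of weight `1` or `2` modulo `4`. -/
def IsSpecial (m : Fin 6 → ZMod 2) : Prop :=
  (∑ i, (m i).val) % 4 = 1 ∨ (∑ i, (m i).val) % 4 = 2

instance : DecidablePred IsSpecial := fun _ => inferInstanceAs (Decidable (_ ∨ _))

instance : DecidablePred (IsGoodPair IsSpecial) := fun _ => inferInstanceAs (Decidable (_ ∧ _))

lemma isSpecial_iff (m : Fin 6 → ZMod 2) :
    IsSpecial m ↔ ∃ S ∈ powersetCard 2 (univ : Finset (Fin 8)), coordMap (indFun S) = m := by
  revert m
  unfold indFun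
  decide +kernel

lemma indFun_mem (S : Finset (Fin 8)) (hS : S.card = 2) : indFun S ∈ V3 := by
  rw [mem_V3]
  simp [indFun, hS]
  decide

lemma hasRep_iff (x : E3) : hasRep 2 x ↔ IsSpecial (e3Equiv x) := by
  rw [isSpecial_iff, hasRep]
  refine exists_congr fun S => ?_
  rw [mem_powersetCard_univ]
  refine and_congr_right fun hS => ?_
  rw [cls, dif_pos (indFun_mem S hS), ← e3Equiv.injective.eq_iff, e3Equiv_mk]

lemma card_goodPair : Nat.card {p : E3 × E3 // IsGoodPair (hasRep 2) p} = 560 := by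
  have h : Nat.card {p : E3 × E3 // IsGoodPair (hasRep 2) p} =
      Nat.card {p : (Fin 6 → ZMod 2) × (Fin 6 → ZMod 2) // IsGoodPair IsSpecial p} := by
    refine Nat.card_congr ((e3Equiv.toEquiv.prodCongr e3Equiv.toEquiv).subtypeEquiv ?_)
    rintro ⟨a, b⟩
    simp [IsGoodPair, hasRep_iff]
  rw [h, Nat.card_eq_fintype_card, Fintype.card_subtype]
  decide +kernel

/-- the number of 2-dimensional subspaces `W ⊆ E₃` exactly one of whose
three nonzero elements has a 2-element representative equals 280 (Klein coverings of
hyperelliptic genus 3 curves of type I.2). -/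
theorem statement8 :
    Nat.card {W : Submodule (ZMod 2) E3 //
      Module.finrank (ZMod 2) W = 2 ∧
      Nat.card {x : E3 // x ∈ W ∧ x ≠ 0 ∧ hasRep 2 x} = 1} = 280 := by
  have : Finite E3 := Finite.of_equiv _ e3Equiv.symm.toEquiv
  have h := two_mul_card_planes (hasRep 2)
  rw [card_goodPair] at h
  exact (Nat.mul_left_cancel two_pos h).symm

end
end

section
/- A 2-dimensional subspace W ⊆ E_3 is totally isotropic for the form e if and only if the number of nonzero elements of W having a 2-element representative is 0 or 2. In particular, the types II.1 (no nonzero element with a 2-element representative) and II.2 (exactly two such elements) are exactly the isotropic Klein subgroups, while types I.1 (three such elements) and I.2 (exactly one such element) are exactly the non-isotropic ones; consequently, of the 651 two-dimensional subspaces of E_3, exactly 315 are totally isotropic and 336 are not. -/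
/-!
The function `q([S]) = |S| / 2 mod 2` is well defined on `E3` (complementation replaces `|S|` by
`8 - |S|`, and `8 / 2` is even), and it is a quadratic form whose polar form is `e`, because
`|S ∆ T| = |S| + |T| - 2 |S ∩ T|`. A class has a 2-element representative exactly when `q` takes
the value 1 on it (`hasRep_two_mk`), so the polarization identity (`eForm_eq_zero_iff`) says that
`e(x, y)` is the parity of the number of classes among `x`, `y`, `x + y` with a 2-element
representative. For a plane `W` with basis `x, y` these are all the nonzero elements, and `W` is
isotropic if and only if `e(x, y) = 0`; this gives the criterion (`isotropic_iff_card`).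

For the counts, every plane has six ordered bases (`card_subspaces_mul_six`). As `E3` has dimension
6, there are `63 * 62 = 6 * 651` linearly independent pairs in it. As `e` is alternating and
nondegenerate, the orthogonal of `x ≠ 0` is a hyperplane containing `x`, so `63 * (32 - 2) = 6 * 315`
of these pairs are orthogonal (`card_isotropic_frames`).
-/

open Finset Submodule

noncomputable section

/-- The intersection pairing on `V3`. -/
def eV : V3 →ₗ[ZMod 2] V3 →ₗ[ZMod 2] ZMod 2 :=
  LinearMap.mk₂ (ZMod 2) (fun v w => ∑ i, v.1 i * w.1 i)
    (fun v v' w => by simp [add_mul, Finset.sum_add_distrib])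
    (fun c v w => by simp [Finset.mul_sum, mul_assoc])
    (fun v w w' => by simp [mul_add, Finset.sum_add_distrib])
    (fun c v w => by
      simp only [SetLike.val_smul, Pi.smul_apply, smul_eq_mul, Finset.mul_sum]
      exact Finset.sum_congr rfl fun i _ => by ring)

lemma eV_onesV_right (v : V3) : eV v onesV = 0 := by
  have h := (mem_V3 v.1).mp v.2
  simpa [eV, onesV] using h

lemma eV_onesV_left (w : V3) : eV onesV w = 0 := by
  have h := (mem_V3 w.1).mp w.2
  simpa [eV, onesV] using h

def eQ1 : V3 →ₗ[ZMod 2] (E3 →ₗ[ZMod 2] ZMod 2) where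
  toFun v := Submodule.liftQ _ (eV v) (by
    rw [Submodule.span_le, Set.singleton_subset_iff, SetLike.mem_coe, LinearMap.mem_ker]
    exact eV_onesV_right v)
  map_add' v v' := Submodule.linearMap_qext _ (by
    simp [Submodule.liftQ_mkQ, LinearMap.add_comp, map_add])
  map_smul' c v := Submodule.linearMap_qext _ (by
    simp [Submodule.liftQ_mkQ, LinearMap.smul_comp, map_smul])

/-- The Weil-type form `e` on `E3`: `e([S],[T]) = |S ∩ T| mod 2`. -/
def eForm : E3 →ₗ[ZMod 2] E3 →ₗ[ZMod 2] ZMod 2 :=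
  Submodule.liftQ _ eQ1 (by
    rw [Submodule.span_le, Set.singleton_subset_iff, SetLike.mem_coe, LinearMap.mem_ker]
    refine Submodule.linearMap_qext _ (LinearMap.ext fun w => ?_)
    simpa [eQ1] using eV_onesV_left w)

/-- The weight of a vector: the cardinality of the subset of `Fin 8` that it is the indicator
function of. -/
def wt (v : Fin 8 → ZMod 2) : ℕ := #{i | v i = 1}

lemma zmod2_cases (a : ZMod 2) : a = 0 ∨ a = 1 := by revert a; decide

lemma sum_eq_wt (v : Fin 8 → ZMod 2) : ∑ i, v i = (wt v : ZMod 2) := by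
  rw [wt, Finset.card_filter]
  push_cast
  refine Finset.sum_congr rfl fun i _ => ?_
  rcases zmod2_cases (v i) with h | h <;> simp [h]

lemma even_wt (v : V3) : Even (wt v.1) := by
  rw [← ZMod.natCast_eq_zero_iff_even, ← sum_eq_wt]
  exact (mem_V3 _).1 v.2

/-- Inclusion–exclusion for symmetric differences: `|S ∆ T| + 2 |S ∩ T| = |S| + |T|`. -/
lemma wt_add (v w : Fin 8 → ZMod 2) :
    wt (v + w) + 2 * wt (v * w) = wt v + wt w := by
  simp only [wt, Finset.card_filter, Finset.mul_sum, ← Finset.sum_add_distrib]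
  refine Finset.sum_congr rfl fun i _ => ?_
  rcases zmod2_cases (v i) with h | h <;> rcases zmod2_cases (w i) with h' | h' <;>
    simp [h, h', show (1 + 1 : ZMod 2) = 0 from rfl]

lemma wt_indFun (S : Finset (Fin 8)) : wt (indFun S) = S.card := by
  simp [wt, indFun]

lemma wt_add_one (v : Fin 8 → ZMod 2) : wt (v + 1) + wt v = 8 := by
  simp only [wt, Finset.card_filter, ← Finset.sum_add_distrib]
  rw [Finset.sum_congr rfl (g := fun _ => 1)]
  · simp
  intro i _
  rcases zmod2_cases (v i) with h | h <;> simp [h, show (1 + 1 : ZMod 2) = 0 from rfl]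

lemma mk_eq_mk_iff (v w : V3) :
    (Submodule.Quotient.mk v : E3) = Submodule.Quotient.mk w ↔ v = w ∨ v = w + onesV := by
  rw [Submodule.Quotient.eq, Submodule.mem_span_singleton]
  constructor
  · rintro ⟨c, hc⟩
    rcases zmod2_cases c with rfl | rfl
    · left; rw [zero_smul] at hc; exact (sub_eq_zero.1 hc.symm)
    · right; rw [one_smul] at hc; rw [hc]; abel
  · rintro (rfl | rfl)
    · exact ⟨0, by simp⟩
    · exact ⟨1, by simp⟩

lemma eForm_mk (v w : V3) :
    eForm (Submodule.Quotient.mk v) (Submodule.Quotient.mk w) = (wt (v.1 * w.1) : ZMod 2) := by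
  rw [← sum_eq_wt]; rfl

lemma cls_eq (v : V3) (S : Finset (Fin 8)) (h : indFun S = v.1) :
    cls S = Submodule.Quotient.mk v := by
  have h' : indFun S ∈ V3 := h ▸ v.2
  rw [cls, dif_pos h']
  congr 1
  exact Subtype.ext h

lemma indFun_supp (v : Fin 8 → ZMod 2) : indFun {i | v i = 1} = v := by
  funext i
  rcases zmod2_cases (v i) with h | h <;> simp [indFun, h]

/-- Representatives of a class are a set and its complement, so a class has a 2-element
representative exactly when its (even) representatives have 2 or 6 elements, that is, when half
their cardinality is odd. -/
lemma hasRep_two_mk (v : V3) :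
    hasRep 2 (Submodule.Quotient.mk v) ↔ wt v.1 % 4 = 2 := by
  have h8 : wt (v + onesV : V3).1 + wt v.1 = 8 := wt_add_one v.1
  constructor
  · rintro ⟨S, hS, hc⟩
    have hm : indFun S ∈ V3 := by
      rw [mem_V3, sum_eq_wt, wt_indFun, hS]; rfl
    rw [cls_eq ⟨_, hm⟩ S rfl, mk_eq_mk_iff] at hc
    have hw := wt_indFun S
    rcases hc with h | h
    · rw [← h]; simp only []; omega
    · rw [← h] at h8; simp only [] at h8; omega
  · intro h
    rcases (by omega : wt v.1 = 2 ∨ wt v.1 = 6) with h | h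
    · exact ⟨_, h, cls_eq v _ (indFun_supp _)⟩
    · refine ⟨({i | (v + onesV : V3).1 i = 1} : Finset (Fin 8)), by change wt (v + onesV : V3).1 = 2; omega, ?_⟩
      rw [cls_eq (v + onesV) _ (indFun_supp _), mk_eq_mk_iff]
      exact Or.inr rfl

/-- The polarization identity `e(x, y) = q(x + y) + q(x) + q(y)` for the quadratic form
`q([S]) = |S| / 2 mod 2`, with `q(z) = 1` written as `hasRep 2 z`. -/
lemma eForm_eq_zero_iff (x y : E3) :
    eForm x y = 0 ↔ (hasRep 2 (x + y) ↔ (¬ hasRep 2 x ↔ hasRep 2 y)) := by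
  induction x using Submodule.Quotient.induction_on with | _ v
  induction y using Submodule.Quotient.induction_on with | _ w
  rw [eForm_mk, ← Submodule.Quotient.mk_add, hasRep_two_mk, hasRep_two_mk, hasRep_two_mk,
    ZMod.natCast_eq_zero_iff_even, Nat.even_iff]
  have h : wt (v + w : V3).1 + _ = _ := wt_add v.1 w.1
  have hv := Nat.even_iff.1 (even_wt v)
  have hw := Nat.even_iff.1 (even_wt w)
  omega

lemma not_hasRep_zero : ¬ hasRep 2 (0 : E3) := by
  rw [← Submodule.Quotient.mk_zero, hasRep_two_mk]
  simp [wt]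

lemma add_self_E3 (x : E3) : x + x = 0 := by
  rw [← two_smul (ZMod 2) x, show (2 : ZMod 2) = 0 from rfl, zero_smul]

lemma eForm_self (x : E3) : eForm x x = 0 := by
  rw [eForm_eq_zero_iff, add_self_E3]
  have := not_hasRep_zero
  tauto

lemma eForm_comm (x y : E3) : eForm x y = eForm y x := by
  have h := eForm_self (x + y)
  simp only [map_add, LinearMap.add_apply, eForm_self, zero_add, add_zero] at h
  generalize eForm x y = a at *
  generalize eForm y x = b at *
  revert a b; decide

/-- A vector orthogonal to all pairs `{i, j}` is constant, hence zero in `E3`. -/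
lemma eForm_nondegenerate {x : E3} (hx : x ≠ 0) : eForm x ≠ 0 := by
  induction x using Submodule.Quotient.induction_on with | _ v
  contrapose! hx
  have key (i j : Fin 8) (hij : i ≠ j) : v.1 i + v.1 j = 0 := by
    have hm : (Pi.single i 1 + Pi.single j 1 : Fin 8 → ZMod 2) ∈ V3 := by
      rw [mem_V3]; simp [Finset.sum_add_distrib]; rfl
    have h : ∑ k, v.1 k * (Pi.single i 1 + Pi.single j 1 : Fin 8 → ZMod 2) k = 0 :=
      LinearMap.congr_fun hx (Submodule.Quotient.mk ⟨_, hm⟩)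
    simpa [mul_add, Finset.sum_add_distrib, Pi.single_apply] using h
  have hc (i : Fin 8) : v.1 i = v.1 0 := by
    by_cases hi : i = 0
    · rw [hi]
    · have := key i 0 hi
      generalize v.1 i = a at *
      generalize v.1 0 = b at *
      revert a b; decide
  rw [← Submodule.Quotient.mk_zero, mk_eq_mk_iff]
  rcases zmod2_cases (v.1 0) with h | h
  · exact Or.inl (Subtype.ext (funext fun i => (hc i).trans h))
  · exact Or.inr (by rw [zero_add]; exact Subtype.ext (funext fun i => (hc i).trans h))

lemma finrank_E3 : Module.finrank (ZMod 2) E3 = 6 := by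
  have h1 := sumMap.finrank_range_add_finrank_ker
  have hs : LinearMap.range sumMap = ⊤ := LinearMap.range_eq_top.2 fun c =>
    ⟨Pi.single 0 c, by simp⟩
  rw [hs, finrank_top, Module.finrank_self, Module.finrank_fin_fun] at h1
  have h2 := Submodule.finrank_quotient_add_finrank (span (ZMod 2) {onesV})
  rw [finrank_span_singleton (fun h => by
    simpa [onesV] using congrFun (congrArg Subtype.val h) 0)] at h2
  have h3 : 1 + Module.finrank (ZMod 2) V3 = 8 := h1
  change Module.finrank (ZMod 2) E3 + 1 = _ at h2
  omega

instance : Finite E3 := Module.finite_of_finite (ZMod 2)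

lemma span_range_coe_eq {W : Submodule (ZMod 2) E3} (t : Fin 2 → W) (ht : LinearIndependent (ZMod 2) t)
    (hW : Module.finrank (ZMod 2) W = 2) :
    span (ZMod 2) (Set.range fun i => (t i : E3)) = W := by
  apply Submodule.eq_of_le_of_finrank_eq
  · rw [span_le]
    rintro _ ⟨i, rfl⟩
    exact (t i).2
  · exact (finrank_span_eq_card (ht.map' W.subtype W.ker_subtype)).trans
      (by rw [hW, Fintype.card_fin])

/-- Each plane has `(4 - 1) * (4 - 2) = 6` ordered bases, so the planes satisfying `p` can be
counted through the linearly independent pairs whose span satisfies `p`. -/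
lemma card_subspaces_mul_six (p : Submodule (ZMod 2) E3 → Prop) :
    Nat.card {W : Submodule (ZMod 2) E3 // Module.finrank (ZMod 2) W = 2 ∧ p W} * 6 =
      Nat.card {s : Fin 2 → E3 //
        LinearIndependent (ZMod 2) s ∧ p (span (ZMod 2) (Set.range s))} := by
  let f : {s : Fin 2 → E3 //
        LinearIndependent (ZMod 2) s ∧ p (span (ZMod 2) (Set.range s))} →
      {W : Submodule (ZMod 2) E3 // Module.finrank (ZMod 2) W = 2 ∧ p W} :=
    fun s => ⟨span (ZMod 2) (Set.range s.1),
      by rw [finrank_span_eq_card s.2.1, Fintype.card_fin], s.2.2⟩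
  have hf (W) : Nat.card {s // f s = W} = 6 := by
    obtain ⟨W, hW, hp⟩ := W
    -- The fibre over `W` is in bijection with the ordered bases of `W`.
    have h6 := card_linearIndependent (K := ZMod 2) (V := W) (k := 2) (by rw [hW])
    rw [hW] at h6
    simp only [Fin.prod_univ_two, ZMod.card] at h6
    norm_num at h6
    rw [← h6]
    symm
    refine Nat.card_eq_of_bijective (fun t => ⟨⟨fun i => (t.1 i : E3), ?_⟩, ?_⟩) ⟨?_, ?_⟩
    · have hs := span_range_coe_eq t.1 t.2 hW
      exact ⟨t.2.map' W.subtype W.ker_subtype, by rwa [hs]⟩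
    · exact Subtype.ext (span_range_coe_eq t.1 t.2 hW)
    · intro t t' h
      have h' := congrArg (fun u => u.1.1) h
      exact Subtype.ext (funext fun i => Subtype.ext (congrFun h' i))
    · rintro ⟨⟨s, hs, hs'⟩, h⟩
      have h' : span (ZMod 2) (Set.range s) = W := congrArg Subtype.val h
      have hm (i) : s i ∈ W := h' ▸ subset_span ⟨i, rfl⟩
      exact ⟨⟨fun i => ⟨s i, hm i⟩, LinearIndependent.of_comp W.subtype hs⟩, rfl⟩
  have := Fintype.ofFinite {W : Submodule (ZMod 2) E3 // Module.finrank (ZMod 2) W = 2 ∧ p W}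
  rw [← Nat.card_congr (Equiv.sigmaFiberEquiv f), Nat.card_sigma]
  simp [hf, Finset.sum_const]

lemma linearIndependent_pair_iff (s : Fin 2 → E3) :
    LinearIndependent (ZMod 2) s ↔ s 0 ≠ 0 ∧ s 1 ≠ 0 ∧ s 1 ≠ s 0 := by
  rw [linearIndependent_fin2]
  constructor
  · rintro ⟨h1, h⟩
    exact ⟨fun h0 => h 0 (by simp [h0]), h1, fun h' => h 1 (by simpa using h')⟩
  · rintro ⟨h0, h1, h⟩
    refine ⟨h1, fun a => ?_⟩
    rcases zmod2_cases a with rfl | rfl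
    · simpa using h0.symm
    · simpa using h

lemma isotropic_span_iff (s : Fin 2 → E3) :
    (∀ x ∈ span (ZMod 2) (Set.range s), ∀ y ∈ span (ZMod 2) (Set.range s), eForm x y = 0) ↔
      eForm (s 0) (s 1) = 0 := by
  refine ⟨fun h => h _ (subset_span ⟨0, rfl⟩) _ (subset_span ⟨1, rfl⟩), fun h x hx y hy => ?_⟩
  have h' : eForm (s 1) (s 0) = 0 := by rw [eForm_comm, h]
  induction hx, hy using span_induction₂ with
  | mem_mem x y hx hy =>
    obtain ⟨i, rfl⟩ := hx
    obtain ⟨j, rfl⟩ := hy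
    fin_cases i <;> fin_cases j <;> simp [eForm_self, h, h']
  | zero_left => simp
  | zero_right => simp
  | add_left x y z _ _ _ h1 h2 => simp [h1, h2]
  | add_right x y z _ _ _ h1 h2 => simp [h1, h2]
  | smul_left r x y _ _ h1 => simp [h1]
  | smul_right r x y _ _ h1 => simp [h1]

lemma card_E3 : Nat.card E3 = 64 := by
  rw [Module.natCard_eq_pow_finrank (K := ZMod 2), finrank_E3]; simp

/-- The hyperplane orthogonal to `x` has 32 elements, among them `0` and `x`. -/
lemma card_orthogonal {x : E3} (hx : x ≠ 0) :
    Nat.card {y : E3 // y ≠ 0 ∧ y ≠ x ∧ eForm x y = 0} = 30 := by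
  have hr := (eForm x).finrank_range_add_finrank_ker
  rw [LinearMap.range_eq_top.2 (LinearMap.surjective (eForm_nondegenerate hx)), finrank_top,
    Module.finrank_self, finrank_E3] at hr
  have hk : Nat.card (LinearMap.ker (eForm x)) = 32 := by
    rw [Module.natCard_eq_pow_finrank (K := ZMod 2),
      show Module.finrank (ZMod 2) (LinearMap.ker (eForm x)) = 5 by omega]
    simp
  have hset : {y : E3 | y ≠ 0 ∧ y ≠ x ∧ eForm x y = 0} =
      (LinearMap.ker (eForm x) : Set E3) \ {0, x} := by
    ext y
    simp only [Set.mem_ofPred_eq, Set.mem_sdiff, SetLike.mem_coe, LinearMap.mem_ker,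
      Set.mem_insert_iff, Set.mem_singleton_iff]
    tauto
  change Set.ncard {y : E3 | y ≠ 0 ∧ y ≠ x ∧ eForm x y = 0} = 30
  rw [hset, Set.ncard_sdiff, Set.ncard_pair hx.symm]
  · change Nat.card (LinearMap.ker (eForm x)) - 2 = 30
    omega
  · rintro y (rfl | rfl)
    · simp
    · exact eForm_self y

/-- An ordered basis of an isotropic plane is a choice of `x ≠ 0` and then of one of the 30 vectors
orthogonal to `x` and different from `0` and `x`. -/
lemma card_isotropic_frames :
    Nat.card {s : Fin 2 → E3 // LinearIndependent (ZMod 2) s ∧ eForm (s 0) (s 1) = 0} =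
      63 * 30 := by
  let φ : {s : Fin 2 → E3 // LinearIndependent (ZMod 2) s ∧ eForm (s 0) (s 1) = 0} ≃
      Σ x : {x : E3 // x ≠ 0}, {y : E3 // y ≠ 0 ∧ y ≠ x.1 ∧ eForm x.1 y = 0} :=
    { toFun := fun s =>
        have h := (linearIndependent_pair_iff s.1).1 s.2.1
        ⟨⟨s.1 0, h.1⟩, ⟨s.1 1, h.2.1, h.2.2, s.2.2⟩⟩
      invFun := fun z => ⟨![z.1.1, z.2.1], (linearIndependent_pair_iff _).2
        ⟨z.1.2, z.2.2.1, z.2.2.2.1⟩, z.2.2.2.2⟩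
      left_inv := fun s => Subtype.ext (by funext i; fin_cases i <;> rfl)
      right_inv := fun _ => rfl }
  have := Fintype.ofFinite {x : E3 // x ≠ 0}
  have h63 : Nat.card {x : E3 // x ≠ 0} = 63 := by
    change Set.ncard {(0 : E3)}ᶜ = 63
    rw [Set.ncard_compl, card_E3, Set.ncard_singleton]
  rw [Nat.card_congr φ, Nat.card_sigma, Finset.sum_congr rfl fun x _ => card_orthogonal x.2,
    Finset.sum_const, Finset.card_univ, ← Nat.card_eq_fintype_card, h63, smul_eq_mul]

lemma card_planes :
    Nat.card {W : Submodule (ZMod 2) E3 // Module.finrank (ZMod 2) W = 2} = 651 := by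
  have h := card_subspaces_mul_six fun _ => True
  simp only [and_true] at h
  rw [card_linearIndependent (by rw [finrank_E3]; norm_num), finrank_E3] at h
  simp [Fin.prod_univ_two] at h
  omega

lemma card_isotropic_planes :
    Nat.card {W : Submodule (ZMod 2) E3 //
      Module.finrank (ZMod 2) W = 2 ∧ ∀ x ∈ W, ∀ y ∈ W, eForm x y = 0} = 315 := by
  have h := card_subspaces_mul_six fun W => ∀ x ∈ W, ∀ y ∈ W, eForm x y = 0
  simp only [isotropic_span_iff] at h
  rw [card_isotropic_frames] at h
  omega

/-- With basis `x, y`, the nonzero elements of `W` are `x, y, x + y`; by the polarization identity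
`W` is isotropic exactly when an even number of them satisfies `hasRep 2`. -/
lemma isotropic_iff_card (W : Submodule (ZMod 2) E3) (hW : Module.finrank (ZMod 2) W = 2) :
    (∀ x ∈ W, ∀ y ∈ W, eForm x y = 0) ↔
      (Nat.card {x : E3 // x ∈ W ∧ x ≠ 0 ∧ hasRep 2 x} = 0 ∨
       Nat.card {x : E3 // x ∈ W ∧ x ≠ 0 ∧ hasRep 2 x} = 2) := by
  classical
  let b := Module.finBasisOfFinrankEq (ZMod 2) W hW
  have hs := span_range_coe_eq b b.linearIndependent hW
  obtain ⟨hx, hy, hxy⟩ := (linearIndependent_pair_iff _).1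
    (b.linearIndependent.map' W.subtype W.ker_subtype)
  have hiso := isotropic_span_iff fun i => (b i : E3)
  rw [hs] at hiso
  simp only [Function.comp_apply, subtype_apply] at hx hy hxy
  have hmem (z : E3) : z ∈ W ↔ z = 0 ∨ z = b 0 ∨ z = b 1 ∨ z = b 0 + b 1 := by
    have hr : (Set.range fun i => (b i : E3)) = {(b 0 : E3), (b 1 : E3)} := by
      ext; simp [Fin.exists_fin_two, eq_comm]
    constructor
    · intro hz
      rw [← hs, hr, mem_span_pair] at hz
      obtain ⟨c, d, rfl⟩ := hz
      rcases zmod2_cases c with rfl | rfl <;> rcases zmod2_cases d with rfl | rfl <;> simp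
    · rintro (rfl | rfl | rfl | rfl)
      exacts [W.zero_mem, (b 0).2, (b 1).2, W.add_mem (b 0).2 (b 1).2]
  rw [hiso, eForm_eq_zero_iff]
  generalize (b 0 : E3) = x at *
  generalize (b 1 : E3) = y at *
  have hset : {z : E3 | z ∈ W ∧ z ≠ 0 ∧ hasRep 2 z} =
      (({x, y, x + y} : Finset E3).filter (hasRep 2) : Finset E3) := by
    ext z
    simp only [Set.mem_ofPred_eq, hmem, Finset.coe_filter, Finset.mem_insert,
      Finset.mem_singleton]
    have h0 : hasRep 2 z → z ≠ 0 := by rintro h rfl; exact not_hasRep_zero h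
    tauto
  have hcard : Nat.card {z : E3 // z ∈ W ∧ z ≠ 0 ∧ hasRep 2 z} =
      (({x, y, x + y} : Finset E3).filter (hasRep 2)).card := by
    rw [← Set.ncard_coe_finset, ← hset]; rfl
  have hx' : x ≠ x + y := by simpa using hy
  have hy' : y ≠ x + y := by simpa using hx
  rw [hcard, Finset.card_filter, Finset.sum_insert (by simp [hxy.symm, hy]),
    Finset.sum_pair hy']
  by_cases h1 : hasRep 2 x <;> by_cases h2 : hasRep 2 y <;> by_cases h3 : hasRep 2 (x + y) <;>
    simp [h1, h2, h3]

/-- a 2-dimensional subspace `W ⊆ E₃` is totally isotropic for the form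
`e` iff the number of its nonzero elements with a 2-element representative is 0 or 2
(types II.1 and II.2 are exactly the isotropic Klein subgroups; types I.1 and I.2 the
non-isotropic ones); consequently, of the 651 two-dimensional subspaces of `E₃`,
exactly 315 are totally isotropic and 336 are not. -/
theorem statement11 :
    (∀ W : Submodule (ZMod 2) E3, Module.finrank (ZMod 2) W = 2 →
      ((∀ x ∈ W, ∀ y ∈ W, eForm x y = 0) ↔
        (Nat.card {x : E3 // x ∈ W ∧ x ≠ 0 ∧ hasRep 2 x} = 0 ∨
         Nat.card {x : E3 // x ∈ W ∧ x ≠ 0 ∧ hasRep 2 x} = 2))) ∧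
    Nat.card {W : Submodule (ZMod 2) E3 // Module.finrank (ZMod 2) W = 2} = 651 ∧
    Nat.card {W : Submodule (ZMod 2) E3 //
      Module.finrank (ZMod 2) W = 2 ∧ ∀ x ∈ W, ∀ y ∈ W, eForm x y = 0} = 315 ∧
    Nat.card {W : Submodule (ZMod 2) E3 //
      Module.finrank (ZMod 2) W = 2 ∧ ¬ (∀ x ∈ W, ∀ y ∈ W, eForm x y = 0)} = 336 := by
  refine ⟨isotropic_iff_card, card_planes, card_isotropic_planes, ?_⟩
  classical
  have hsum := Nat.card_congr (Equiv.sumCompl fun W : {W : Submodule (ZMod 2) E3 //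
    Module.finrank (ZMod 2) W = 2} => ∀ x ∈ W.1, ∀ y ∈ W.1, eForm x y = 0)
  rw [Nat.card_sum, card_planes,
    Nat.card_congr (Equiv.subtypeSubtypeEquivSubtypeInter
      (fun W : Submodule (ZMod 2) E3 => Module.finrank (ZMod 2) W = 2)
      (fun W => ∀ x ∈ W, ∀ y ∈ W, eForm x y = 0)),
    Nat.card_congr (Equiv.subtypeSubtypeEquivSubtypeInter
      (fun W : Submodule (ZMod 2) E3 => Module.finrank (ZMod 2) W = 2)
      (fun W => ¬ ∀ x ∈ W, ∀ y ∈ W, eForm x y = 0)), card_isotropic_planes] at hsum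
  omega

end
end
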